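/- arXiv:2308.12614 — 2 statements merged into one kernel-verified Lean document; each statement's English description precedes it below -/
import Mathlib

section
/- A graph G is a split graph if and only if both G and its complement are chordal. -/
/-- A graph is chordal: it contains no induced cycle of length at least 4. -/
def IsChordal {V : Type*} (G : SimpleGraph V) : Prop :=
  ∀ n : ℕ, 4 ≤ n → ¬ ∃ f : ZMod n → V, Function.Injective f ∧
    ∀ i j : ZMod n, G.Adj (f i) (f j) ↔ (j = i + 1 ∨ i = j + 1)

/-- A split graph: the vertex set partitions into a clique and an independent set. -/
def IsSplit {V : Type*} (G : SimpleGraph V) : Prop :=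
  ∃ K S : Set V, K ∪ S = Set.univ ∧ K ∩ S = ∅ ∧
    G.IsClique K ∧ ∀ u ∈ S, ∀ v ∈ S, ¬ G.Adj u v

/-!
Splitness passes to complements and to induced subgraphs, and no cycle of length at least four is
split, so a split graph and its complement are chordal.

Conversely, only the absence of induced `C₄`, `2K₂` and `C₅` matters (Földes–Hammer). In a finite
graph, let `K` be a clique maximizing the sum of `degree + 1`; these weights are positive, so `K` is
a maximal clique. Suppose that `uv` is an edge outside `K`. Without induced `C₄` and `2K₂`, one
endpoint `x` has a unique non-neighbour `z` in `K`, and `z` is not adjacent to the other endpoint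
`y` either. Exchanging `z` for `x` gives `degree x ≤ degree z`, so `z` has a neighbour `w` not
adjacent to `x`. Such a `w` is adjacent to all of `K`, as otherwise there is an induced `2K₂`, `C₄`
or `C₅`; this contradicts the maximality of `K`. Rado's selection principle extends the result to
infinite graphs.
-/

section SplitIffChordal

open SimpleGraph

variable {V W : Type*} {G : SimpleGraph V} {H : SimpleGraph W}

theorem cycleGraph_adj_iff_eq_add_one {n : ℕ} {i j : Fin (n + 2)} :
    (cycleGraph (n + 2)).Adj i j ↔ j = i + 1 ∨ i = j + 1 := by
  rw [cycleGraph_adj, sub_eq_iff_eq_add', sub_eq_iff_eq_add', or_comm]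

theorem isChordal_iff_not_cycleGraph_isIndContained :
    IsChordal G ↔ ∀ n, 4 ≤ n → ¬ cycleGraph n ⊴ G := by
  refine forall₂_congr fun n hn => not_congr ?_
  obtain ⟨n, rfl⟩ := Nat.exists_eq_add_of_le' hn
  -- `ZMod (n + 4)` is definitionally `Fin (n + 4)`, the vertex type of `cycleGraph (n + 4)`.
  constructor
  · rintro ⟨f, hf, hadj⟩
    exact ⟨⟨⟨f, hf⟩, (hadj _ _).trans cycleGraph_adj_iff_eq_add_one.symm⟩⟩
  · rintro ⟨f⟩
    exact ⟨f, f.injective, fun _ _ => f.map_adj_iff.trans cycleGraph_adj_iff_eq_add_one⟩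

theorem isSplit_iff_exists_isClique_isIndepSet_compl :
    IsSplit G ↔ ∃ K, G.IsClique K ∧ G.IsIndepSet Kᶜ := by
  constructor
  · rintro ⟨K, S, hunion, hinter, hK, hS⟩
    obtain rfl : Kᶜ = S := (IsCompl.of_eq hinter hunion).compl_eq
    exact ⟨K, hK, fun u hu v hv _ => hS u hu v hv⟩
  · rintro ⟨K, hK, hS⟩
    exact ⟨K, Kᶜ, Set.union_compl_self K, Set.inter_compl_self K, hK,
      fun u hu v hv huv => hS hu hv huv.ne huv⟩

theorem IsSplit.compl (h : IsSplit G) : IsSplit Gᶜ := by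
  rw [isSplit_iff_exists_isClique_isIndepSet_compl] at h ⊢
  obtain ⟨K, hK, hS⟩ := h
  exact ⟨Kᶜ, (isClique_compl G).2 hS, by rwa [compl_compl, isIndepSet_compl]⟩

theorem IsSplit.of_isIndContained (hH : IsSplit H) (hGH : G ⊴ H) : IsSplit G := by
  rw [isSplit_iff_exists_isClique_isIndepSet_compl] at hH ⊢
  obtain ⟨K, hK, hS⟩ := hH
  obtain ⟨f⟩ := hGH
  exact ⟨f ⁻¹' K, fun u hu v hv huv => f.map_adj_iff.1 (hK hu hv (f.injective.ne huv)),
    fun u hu v hv huv hadj => hS hu hv (f.injective.ne huv) (f.map_adj_iff.2 hadj)⟩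

theorem not_isSplit_cycleGraph {n : ℕ} (hn : 4 ≤ n) : ¬ IsSplit (cycleGraph n) := by
  rw [isSplit_iff_exists_isClique_isIndepSet_compl]
  rintro ⟨K, hK, hS⟩
  obtain ⟨n, rfl⟩ := Nat.exists_eq_add_of_le' hn
  have mem_or_mem_add_one (i : Fin (n + 4)) : i ∈ K ∨ i + 1 ∈ K := by
    by_contra! ⟨hi, hi'⟩
    exact hS hi hi' (by simp) (cycleGraph_adj_iff_eq_add_one.2 (.inl rfl))
  have notMem_add_two (i : Fin (n + 4)) (hi : i ∈ K) : i + 1 + 1 ∉ K := fun hi' => by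
    have hne : i ≠ i + 1 + 1 := by
      simp [add_assoc, Fin.ext_iff, Fin.val_add, Nat.mod_eq_of_lt]
    have hnot_adj : ¬ (cycleGraph (n + 4)).Adj i (i + 1 + 1) := by
      simp [cycleGraph_adj_iff_eq_add_one, add_assoc, Fin.ext_iff, Fin.val_add, Nat.mod_eq_of_lt]
    exact hnot_adj (hK hi hi' hne)
  have notMem (i : Fin (n + 4)) : i ∉ K := fun hi => by
    have hi2 : i + 1 + 1 ∉ K := notMem_add_two i hi
    have hi1 : i + 1 ∈ K := (mem_or_mem_add_one _).resolve_right hi2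
    have hi3 : i + 1 + 1 + 1 ∈ K := (mem_or_mem_add_one _).resolve_left hi2
    exact notMem_add_two (i + 1) hi1 hi3
  exact (mem_or_mem_add_one 0).elim (notMem 0) (notMem _)

theorem IsSplit.isChordal (h : IsSplit G) : IsChordal G :=
  isChordal_iff_not_cycleGraph_isIndContained.2 fun _ hn hcycle =>
    not_isSplit_cycleGraph hn (h.of_isIndContained hcycle)

theorem cycleGraph_four_isIndContained {a b c d : V} (hab : G.Adj a b) (hbc : G.Adj b c)
    (hcd : G.Adj c d) (hda : G.Adj d a) (hac : ¬ G.Adj a c) (hbd : ¬ G.Adj b d)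
    (hac_ne : a ≠ c) (hbd_ne : b ≠ d) : cycleGraph 4 ⊴ G := by
  have hinj : Function.Injective ![a, b, c, d] := by
    have := hab.ne; have := hbc.ne; have := hcd.ne; have := hda.ne
    intro i j
    fin_cases i <;> fin_cases j <;> simp_all [eq_comm]
  refine ⟨⟨⟨![a, b, c, d], hinj⟩, ?_⟩⟩
  intro i j
  fin_cases i <;> fin_cases j <;> simp_all [cycleGraph_adj_iff_eq_add_one, G.adj_comm]

theorem cycleGraph_five_isIndContained {a b c d e : V} (hab : G.Adj a b) (hbc : G.Adj b c)
    (hcd : G.Adj c d) (hde : G.Adj d e) (hea : G.Adj e a) (hac : ¬ G.Adj a c)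
    (hbd : ¬ G.Adj b d) (hce : ¬ G.Adj c e) (hda : ¬ G.Adj d a) (heb : ¬ G.Adj e b) :
    cycleGraph 5 ⊴ G := by
  have hinj : Function.Injective ![a, b, c, d, e] := by
    have := hab.ne; have := hbc.ne; have := hcd.ne; have := hde.ne; have := hea.ne
    have : a ≠ c := by rintro rfl; exact hda hcd.symm
    have : b ≠ d := by rintro rfl; exact heb hde.symm
    have : c ≠ e := by rintro rfl; exact hac hea.symm
    have : d ≠ a := by rintro rfl; exact hbd hab.symm
    have : e ≠ b := by rintro rfl; exact hce hbc.symm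
    intro i j
    fin_cases i <;> fin_cases j <;> simp_all [eq_comm]
  refine ⟨⟨⟨![a, b, c, d, e], hinj⟩, ?_⟩⟩
  intro i j
  fin_cases i <;> fin_cases j <;> simp_all [cycleGraph_adj_iff_eq_add_one, G.adj_comm]

theorem cycleGraph_four_isIndContained_compl {a b c d : V} (hab : G.Adj a b) (hcd : G.Adj c d)
    (hac : ¬ G.Adj a c) (had : ¬ G.Adj a d) (hbc : ¬ G.Adj b c) (hbd : ¬ G.Adj b d) :
    cycleGraph 4 ⊴ Gᶜ := by
  have hac_ne : a ≠ c := by rintro rfl; exact had hcd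
  have had_ne : a ≠ d := by rintro rfl; exact hac hcd.symm
  have hbc_ne : b ≠ c := by rintro rfl; exact hac hab
  have hbd_ne : b ≠ d := by rintro rfl; exact had hab
  apply cycleGraph_four_isIndContained (a := a) (b := c) (c := b) (d := d) <;>
    simp_all [G.adj_comm, eq_comm, hab.ne, hcd.ne]

section Clique

variable {K : Set V} {u v w x y z : V}

theorem forall_not_adj_imp_or_forall_not_adj_imp (hC4 : ¬ cycleGraph 4 ⊴ G) (hK : G.IsClique K)
    (huv : G.Adj u v) (hu : u ∉ K) (hv : v ∉ K) :
    (∀ a ∈ K, ¬ G.Adj u a → ¬ G.Adj v a) ∨ ∀ a ∈ K, ¬ G.Adj v a → ¬ G.Adj u a := by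
  by_contra! ⟨⟨a, ha, hua, hva⟩, b, hb, hvb, hub⟩
  have hab : a ≠ b := by rintro rfl; exact hua hub
  exact hC4 <| cycleGraph_four_isIndContained (hK ha hb hab) hub.symm huv hva
    (mt Adj.symm hua) (mt Adj.symm hvb) (ne_of_mem_of_not_mem ha hu) (ne_of_mem_of_not_mem hb hv)

theorem eq_of_not_adj_of_not_adj (hC4c : ¬ cycleGraph 4 ⊴ Gᶜ) (hK : G.IsClique K) (huv : G.Adj u v)
    {a b : V} (ha : a ∈ K) (hb : b ∈ K) (hua : ¬ G.Adj u a) (hva : ¬ G.Adj v a)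
    (hub : ¬ G.Adj u b) (hvb : ¬ G.Adj v b) : a = b := by
  by_contra hab
  exact hC4c (cycleGraph_four_isIndContained_compl huv (hK ha hb hab) hua hub hva hvb)

theorem exists_adj_and_unique_not_adj (hC4 : ¬ cycleGraph 4 ⊴ G) (hC4c : ¬ cycleGraph 4 ⊴ Gᶜ)
    (hK : G.IsClique K) (huv : G.Adj u v) (hu : u ∉ K) (hv : v ∉ K)
    (hua : ∃ a ∈ K, ¬ G.Adj u a) (hva : ∃ a ∈ K, ¬ G.Adj v a) :
    ∃ x y z, G.Adj x y ∧ x ∉ K ∧ z ∈ K ∧ ¬ G.Adj x z ∧ ¬ G.Adj y z ∧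
      ∀ k ∈ K, k ≠ z → G.Adj x k := by
  wlog hsub : ∀ a ∈ K, ¬ G.Adj u a → ¬ G.Adj v a generalizing u v
  · exact this huv.symm hv hu hva hua
      ((forall_not_adj_imp_or_forall_not_adj_imp hC4 hK huv hu hv).resolve_left hsub)
  obtain ⟨z, hz, huz⟩ := hua
  refine ⟨u, v, z, huv, hu, hz, huz, hsub z hz huz, fun k hk hkz => ?_⟩
  by_contra huk
  exact hkz (eq_of_not_adj_of_not_adj hC4c hK huv hk hz huk (hsub k hk huk) huz (hsub z hz huz))

theorem adj_of_mem_of_adj_of_not_adj (hC4 : ¬ cycleGraph 4 ⊴ G) (hC4c : ¬ cycleGraph 4 ⊴ Gᶜ)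
    (hC5 : ¬ cycleGraph 5 ⊴ G) (hK : G.IsClique K) (hxy : G.Adj x y) (hz : z ∈ K)
    (hxz : ¬ G.Adj x z) (hyz : ¬ G.Adj y z) (hx : ∀ k ∈ K, k ≠ z → G.Adj x k)
    (hzw : G.Adj z w) (hxw : ¬ G.Adj x w) {k : V} (hk : k ∈ K) : G.Adj w k := by
  have hwK : w ∉ K := fun hw => hxw (hx w hw hzw.ne')
  have hwy : G.Adj w y := by
    by_contra hwy
    exact hC4c (cycleGraph_four_isIndContained_compl hzw hxy (mt Adj.symm hxz) (mt Adj.symm hyz)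
      (mt Adj.symm hxw) hwy)
  by_contra hwk
  have hkz : k ≠ z := by rintro rfl; exact hwk hzw.symm
  by_cases hky : G.Adj k y
  · exact hC4 (cycleGraph_four_isIndContained (hK hk hz hkz) hzw hwy hky.symm (mt Adj.symm hwk)
      (mt Adj.symm hyz) (ne_of_mem_of_not_mem hk hwK) (by rintro rfl; exact hxz hxy))
  · exact hC5 (cycleGraph_five_isIndContained (hK hk hz hkz) hzw hwy hxy.symm (hx k hk hkz)
      (mt Adj.symm hwk) (mt Adj.symm hyz) (mt Adj.symm hxw) (mt Adj.symm hky) hxz)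

end Clique

theorem exists_adj_not_adj_of_degree_le {x y z : V} [Fintype (G.neighborSet x)]
    [Fintype (G.neighborSet z)] (hdeg : G.degree x ≤ G.degree z) (hxy : G.Adj x y)
    (hzy : ¬ G.Adj z y) : ∃ w, G.Adj z w ∧ ¬ G.Adj x w := by
  by_contra! hsub
  have hssub : G.neighborFinset z ⊂ G.neighborFinset x :=
    Finset.ssubset_iff_of_subset (fun w => by simpa using hsub w) |>.2 ⟨y, by simpa, by simpa⟩
  exact hdeg.not_gt (Finset.card_lt_card hssub)

section MaxWeightClique

variable {M : Type*} [AddCommMonoid M] [LinearOrder M]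

/-- A finite clique of maximum total weight among all finite cliques, for the vertex weights `f`. -/
def IsMaxWeightClique (G : SimpleGraph V) (f : V → M) (K : Finset V) : Prop :=
  G.IsClique (K : Set V) ∧
    ∀ L : Finset V, G.IsClique (L : Set V) → ∑ v ∈ L, f v ≤ ∑ v ∈ K, f v

theorem exists_isMaxWeightClique [Finite V] (G : SimpleGraph V) (f : V → M) :
    ∃ K, IsMaxWeightClique G f K :=
  Set.exists_max_image {K : Finset V | G.IsClique (K : Set V)} (fun K => ∑ v ∈ K, f v)
    (Set.toFinite _) ⟨∅, by simp⟩

namespace IsMaxWeightClique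

variable [IsOrderedCancelAddMonoid M] {f : V → M} {K : Finset V} {x z : V}

theorem exists_not_adj (hK : IsMaxWeightClique G f K) (hfx : 0 < f x) (hx : x ∉ K) :
    ∃ a ∈ K, ¬ G.Adj x a := by
  classical
  by_contra! hxK
  have hle := hK.2 (insert x K) (by
    rw [Finset.coe_insert]
    exact hK.1.insert fun b hb _ => hxK b hb)
  rw [Finset.sum_insert hx] at hle
  exact hle.not_gt (lt_add_of_pos_left _ hfx)

theorem weight_le_of_forall_adj (hK : IsMaxWeightClique G f K) (hx : x ∉ K) (hz : z ∈ K)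
    (hadj : ∀ k ∈ K, k ≠ z → G.Adj x k) : f x ≤ f z := by
  classical
  have hle := hK.2 (insert x (K.erase z)) (by
    rw [Finset.coe_insert, Finset.coe_erase]
    exact (hK.1.subset Set.sdiff_subset).insert fun b hb _ => hadj b hb.1 hb.2)
  rw [Finset.sum_insert (mt Finset.mem_of_mem_erase hx), ← Finset.add_sum_erase K f hz] at hle
  exact le_of_add_le_add_right hle

end IsMaxWeightClique

end MaxWeightClique

theorem IsMaxWeightClique.isIndepSet_compl [G.LocallyFinite] {K : Finset V}
    (hK : IsMaxWeightClique G (fun v => G.degree v + 1) K) (hC4 : ¬ cycleGraph 4 ⊴ G)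
    (hC4c : ¬ cycleGraph 4 ⊴ Gᶜ) (hC5 : ¬ cycleGraph 5 ⊴ G) : G.IsIndepSet (K : Set V)ᶜ := by
  intro u hu v hv _ huv
  obtain ⟨x, y, z, hxy, hxK, hz, hxz, hyz, hx⟩ :=
    exists_adj_and_unique_not_adj hC4 hC4c hK.1 huv hu hv
      (hK.exists_not_adj (Nat.succ_pos _) hu) (hK.exists_not_adj (Nat.succ_pos _) hv)
  have hdeg : G.degree x ≤ G.degree z :=
    Nat.succ_le_succ_iff.1 (hK.weight_le_of_forall_adj hxK hz hx)
  obtain ⟨w, hzw, hxw⟩ := exists_adj_not_adj_of_degree_le hdeg hxy (mt Adj.symm hyz)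
  have hwK : w ∉ K := fun hw => hxw (hx w hw hzw.ne')
  obtain ⟨k, hk, hwk⟩ := hK.exists_not_adj (Nat.succ_pos _) hwK
  exact hwk (adj_of_mem_of_adj_of_not_adj hC4 hC4c hC5 hK.1 hxy hz hxz hyz hx hzw hxw hk)

theorem isSplit_of_finite_of_not_isIndContained [Finite V] (hC4 : ¬ cycleGraph 4 ⊴ G)
    (hC4c : ¬ cycleGraph 4 ⊴ Gᶜ) (hC5 : ¬ cycleGraph 5 ⊴ G) : IsSplit G := by
  classical
  have := Fintype.ofFinite V
  obtain ⟨K, hK⟩ := exists_isMaxWeightClique G fun v => G.degree v + 1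
  exact isSplit_iff_exists_isClique_isIndepSet_compl.2
    ⟨K, hK.1, hK.isIndepSet_compl hC4 hC4c hC5⟩

theorem isSplit_of_forall_finset_induce (h : ∀ s : Finset V, IsSplit (G.induce (s : Set V))) :
    IsSplit G := by
  classical
  simp only [isSplit_iff_exists_isClique_isIndepSet_compl] at h
  choose K hK hS using h
  obtain ⟨χ, hχ⟩ := Finset.rado_selection fun s v => v ∈ Subtype.val '' K s
  have hpair (u v : V) : ∃ (t : Finset V) (hu : u ∈ t) (hv : v ∈ t),
      (χ u ↔ ⟨u, hu⟩ ∈ K t) ∧ (χ v ↔ ⟨v, hv⟩ ∈ K t) := by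
    obtain ⟨t, hst, ht⟩ := hχ {u, v}
    have hu : u ∈ t := hst (by simp)
    have hv : v ∈ t := hst (by simp)
    exact ⟨t, hu, hv, by simp [ht, hu], by simp [ht, hv]⟩
  refine isSplit_iff_exists_isClique_isIndepSet_compl.2
    ⟨{v | χ v}, fun u hu v hv huv => ?_, fun u hu v hv huv => ?_⟩ <;>
    obtain ⟨t, hut, hvt, hχu, hχv⟩ := hpair u v
  · exact hK t (hχu.1 hu) (hχv.1 hv) (by simpa using huv)
  · exact hS t (mt hχu.2 hu) (mt hχv.2 hv) (by simpa using huv)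

theorem isSplit_of_not_isIndContained (hC4 : ¬ cycleGraph 4 ⊴ G) (hC4c : ¬ cycleGraph 4 ⊴ Gᶜ)
    (hC5 : ¬ cycleGraph 5 ⊴ G) : IsSplit G := by
  refine isSplit_of_forall_finset_induce fun s => ?_
  have hs : G.induce (s : Set V) ⊴ G := ⟨Embedding.induce _⟩
  exact isSplit_of_finite_of_not_isIndContained (fun h => hC4 (h.trans hs))
    (fun h => hC4c (h.trans hs.compl)) (fun h => hC5 (h.trans hs))

theorem split_iff_chordal_and_compl_chordal_general (G : SimpleGraph V) :
    IsSplit G ↔ IsChordal G ∧ IsChordal Gᶜ := by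
  refine ⟨fun h => ⟨h.isChordal, h.compl.isChordal⟩, fun ⟨hG, hGc⟩ => ?_⟩
  rw [isChordal_iff_not_cycleGraph_isIndContained] at hG hGc
  exact isSplit_of_not_isIndContained (hG 4 le_rfl) (hGc 4 le_rfl) (hG 5 (by norm_num))

end SplitIffChordal

theorem split_iff_chordal_and_compl_chordal {V : Type*} [Fintype V]
    (G : SimpleGraph V) :
    IsSplit G ↔ IsChordal G ∧ IsChordal Gᶜ :=
  split_iff_chordal_and_compl_chordal_general G
end

section
/- For every n ≥ 2 the graph H_n is a co-TT graph, where H_n consists of a path w, x_1, ..., x_n, v, a vertex y adjacent to w and all x_i (1 ≤ i ≤ n), a vertex z adjacent to v and all x_i, the edge yz, and a vertex u adjacent only to y and z. -/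
/-- `G` is a co-TT (signed-interval) graph. -/
def IsCoTT {V : Type*} (G : SimpleGraph V) : Prop :=
  ∃ l r : V → ℝ, ∀ u v : V, u ≠ v → (G.Adj u v ↔ l u ≤ r v ∧ l v ≤ r u)

/-- Base adjacency of `H_n`.  Vertices: `.inl i` is `x_{i+1}` for `0 ≤ i < n`;
`.inr 0 = w`, `.inr 1 = v`, `.inr 2 = y`, `.inr 3 = z`, `.inr 4 = u`.  Edges:
path `w, x_1, …, x_n, v`; `y` adjacent to `w` and every `x_i`; `z` adjacent to `v`
and every `x_i`; `yz`; `uy`; `uz`. -/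
def hnRel (n : ℕ) (a b : Fin n ⊕ Fin 5) : Prop :=
  (∃ i j : Fin n, a = .inl i ∧ b = .inl j ∧ (j : ℕ) = (i : ℕ) + 1) ∨
  (∃ i : Fin n, a = .inr 0 ∧ b = .inl i ∧ (i : ℕ) = 0) ∨
  (∃ i : Fin n, a = .inl i ∧ (i : ℕ) + 1 = n ∧ b = .inr 1) ∨
  (a = .inr 2 ∧ b = .inr 0) ∨
  (∃ i : Fin n, a = .inr 2 ∧ b = .inl i) ∨
  (a = .inr 3 ∧ b = .inr 1) ∨
  (∃ i : Fin n, a = .inr 3 ∧ b = .inl i) ∨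
  (a = .inr 2 ∧ b = .inr 3) ∨
  (a = .inr 4 ∧ b = .inr 2) ∨ (a = .inr 4 ∧ b = .inr 3)

/-- The graph `H_n`. -/
def HnGraph (n : ℕ) : SimpleGraph (Fin n ⊕ Fin 5) :=
  SimpleGraph.fromRel (hnRel n)

/-!
Without `u`, the graph `H_n` is an interval graph: the `x_i` are intervals of length two,
consecutive ones meeting at their ends, `w` and `v` are the two end points of the union `[0, 2n]` of
the `x_i`, and `y` and `z` are `[0, 2n]` shortened by one on the right and on the left, so that `y`
misses `v` and `z` misses `w`. A reversed interval `r < l` is adjacent to exactly the intervals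
containing `[r, l]`, so reversing `y ∩ z = [1, 2n - 1]` gives an interval for `u` that is adjacent
to `y` and `z` and, as soon as `n ≥ 2`, to nothing else.
-/

/-- The signed-interval graph of `v ↦ (l v, r v)`, where `r v < l v` is allowed. The end points lie
in an arbitrary ordered type, so that a model can be given over the integers. -/
def signedIntervalGraph {V α : Type*} [LE α] (l r : V → α) : SimpleGraph V where
  Adj a b := a ≠ b ∧ l a ≤ r b ∧ l b ≤ r a
  symm := ⟨fun _ _ h => ⟨h.1.symm, h.2.2, h.2.1⟩⟩
  loopless := ⟨fun _ h => h.1 rfl⟩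

theorem signedIntervalGraph_adj {V α : Type*} [LE α] {l r : V → α} {a b : V} :
    (signedIntervalGraph l r).Adj a b ↔ a ≠ b ∧ l a ≤ r b ∧ l b ≤ r a :=
  Iff.rfl

theorem signedIntervalGraph_adj_iff_Icc_subset {V α : Type*} [Preorder α] {l r : V → α} {a b : V}
    (ha : r a < l a) :
    (signedIntervalGraph l r).Adj a b ↔ Set.Icc (r a) (l a) ⊆ Set.Icc (l b) (r b) := by
  rw [signedIntervalGraph_adj, Set.Icc_subset_Icc_iff ha.le, and_comm (a := l b ≤ r a)]
  refine and_iff_right_of_imp ?_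
  rintro ⟨hle, -⟩ rfl
  exact ha.not_ge hle

theorem isCoTT_signedIntervalGraph {V α : Type*} [LinearOrder α] {f : α → ℝ}
    (hf : StrictMono f) (l r : V → α) : IsCoTT (signedIntervalGraph l r) :=
  ⟨f ∘ l, f ∘ r, fun _ _ hne => by
    simp only [signedIntervalGraph_adj, hne, ne_eq, not_false_eq_true, true_and,
      Function.comp_apply, hf.le_iff_le]⟩

namespace HnGraph

variable {n : ℕ}

theorem adj_inl_inl {i j : Fin n} :
    (HnGraph n).Adj (.inl i) (.inl j) ↔ (j : ℕ) = i + 1 ∨ (i : ℕ) = j + 1 := by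
  have ne_of_succ (h : (j : ℕ) = i + 1 ∨ (i : ℕ) = j + 1) : i ≠ j := by
    rintro rfl
    omega
  simpa [HnGraph, hnRel] using ne_of_succ

theorem adj_inr_inl {k : Fin 5} {i : Fin n} :
    (HnGraph n).Adj (.inr k) (.inl i) ↔
      (k = 0 ∧ (i : ℕ) = 0) ∨ (k = 1 ∧ (i : ℕ) + 1 = n) ∨ k = 2 ∨ k = 3 := by
  fin_cases k <;> simp [HnGraph, hnRel]

theorem adj_inr_inr {j k : Fin 5} :
    (HnGraph n).Adj (.inr j) (.inr k) ↔
      s(j, k) ∈ ({s(2, 0), s(3, 1), s(2, 3), s(4, 2), s(4, 3)} : Finset (Sym2 (Fin 5))) := by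
  fin_cases j <;> fin_cases k <;> simp [HnGraph, hnRel]

/-- Left ends of the integer model of `H_n` over which `x_{i+1}` is `[2i, 2i + 2]`. In the order of
the encoding, `w`, `v`, `y`, `z` and `u` are `[0, 0]`, `[2n, 2n]`, `[0, 2n - 1]`, `[1, 2n]` and the
reversed interval with left end `2n - 1` and right end `1`. -/
def leftEnd (n : ℕ) : Fin n ⊕ Fin 5 → ℤ
  | .inl i => 2 * i
  | .inr 0 => 0
  | .inr 1 => 2 * n
  | .inr 2 => 0
  | .inr 3 => 1
  | .inr 4 => 2 * n - 1

/-- Right ends of the integer model of `H_n` whose left ends are `leftEnd n`. -/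
def rightEnd (n : ℕ) : Fin n ⊕ Fin 5 → ℤ
  | .inl i => 2 * i + 2
  | .inr 0 => 0
  | .inr 1 => 2 * n
  | .inr 2 => 2 * n - 1
  | .inr 3 => 2 * n
  | .inr 4 => 1

/-- The signed-interval graph of the integer model, to be identified with `H_n`. -/
def model (n : ℕ) : SimpleGraph (Fin n ⊕ Fin 5) :=
  signedIntervalGraph (leftEnd n) (rightEnd n)

theorem model_adj_inl_inl {i j : Fin n} :
    (model n).Adj (.inl i) (.inl j) ↔ (j : ℕ) = i + 1 ∨ (i : ℕ) = j + 1 := by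
  simp only [model, signedIntervalGraph_adj, leftEnd, rightEnd, ne_eq, Sum.inl.injEq, Fin.ext_iff]
  omega

theorem not_model_adj_inr_four_inl (hn : 2 ≤ n) (i : Fin n) :
    ¬(model n).Adj (.inr 4) (.inl i) := by
  have reversed : rightEnd n (.inr 4) < leftEnd n (.inr 4) := by
    simp only [leftEnd, rightEnd]
    omega
  rw [model, signedIntervalGraph_adj_iff_Icc_subset reversed, Set.Icc_subset_Icc_iff reversed.le]
  simp only [leftEnd, rightEnd]
  omega

theorem model_adj_inr_inl (hn : 2 ≤ n) {k : Fin 5} {i : Fin n} :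
    (model n).Adj (.inr k) (.inl i) ↔
      (k = 0 ∧ (i : ℕ) = 0) ∨ (k = 1 ∧ (i : ℕ) + 1 = n) ∨ k = 2 ∨ k = 3 := by
  have hi := i.isLt
  match k with
  | 0 | 1 | 2 | 3 => grind [model, signedIntervalGraph_adj, leftEnd, rightEnd]
  | 4 => simp [not_model_adj_inr_four_inl hn i]

theorem model_adj_inr_inr (hn : 0 < n) {j k : Fin 5} :
    (model n).Adj (.inr j) (.inr k) ↔
      s(j, k) ∈ ({s(2, 0), s(3, 1), s(2, 3), s(4, 2), s(4, 3)} : Finset (Sym2 (Fin 5))) := by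
  simp only [model, signedIntervalGraph_adj, Finset.mem_insert, Finset.mem_singleton, Sym2.eq_iff]
  fin_cases j <;> fin_cases k <;> grind [leftEnd, rightEnd]

theorem eq_model (hn : 2 ≤ n) : HnGraph n = model n := by
  ext a b
  rcases a with i | j <;> rcases b with i' | k
  · rw [adj_inl_inl, model_adj_inl_inl]
  · rw [SimpleGraph.adj_comm, adj_inr_inl, SimpleGraph.adj_comm, model_adj_inr_inl hn]
  · rw [adj_inr_inl, model_adj_inr_inl hn]
  · rw [adj_inr_inr, model_adj_inr_inr (by omega)]

end HnGraph

/-- For every `n ≥ 2`, `H_n` is a co-TT graph. -/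
theorem HnGraph_isCoTT : ∀ n : ℕ, 2 ≤ n → IsCoTT (HnGraph n) := by
  intro n hn
  rw [HnGraph.eq_model hn]
  exact isCoTT_signedIntervalGraph Int.cast_strictMono _ _
end
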